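/- arXiv:1611.09730 — 3 statements merged into one kernel-verified Lean document; each statement's English description precedes it below -/
import Mathlib

section
/- Let W = W(A, α, u) be a generalized Weyl algebra with u central in A. Let j ≥ 1 be such that uA + α^j(u)A = A, and let J be a two-sided ideal of W. If Y^j ∈ J then Y^{j−1} ∈ J, and if X^j ∈ J then X^{j−1} ∈ J. Consequently, if uA + α^i(u)A = A for all 1 ≤ i ≤ j and either Y^j ∈ J or X^j ∈ J, then J = W. -/
/-!
Write `j = n + 1`. If `Y ^ (n+1) ∈ J`, then multiplying by `X` on either side shows that `J`
contains `X * Y ^ (n+1) = u * Y ^ n` and `Y ^ (n+1) * X = α ^ (n+1) (u) * Y ^ n`; as `u` and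
`α ^ (n+1) (u)` are central in `A` and generate the unit ideal, `Y ^ n ∈ J`. Symmetrically, if
`X ^ (n+1) ∈ J`, then `J` contains `X ^ (n+1) * Y = X ^ n * u` and
`Y * X ^ (n+1) = X ^ n * α ^ (n+1) (u)`, hence `X ^ n`. Iterating down to the exponent `0` puts
`1` in `J`, which gives the last assertion.
-/


noncomputable section

/-- The "monomial" of degree `i` in a generalized Weyl algebra: `Y^i` for `i ≥ 0`
and `X^(-i)` for `i < 0`. -/
def gwaMon {W : Type*} [Monoid W] (X Y : W) : ℤ → W :=
  fun i => if 0 ≤ i then Y ^ i.toNat else X ^ (-i).toNat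

/-- `W` is a generalized Weyl algebra `W(A, α, u)` with respect to the embedding
`ι : A →+* W` and the elements `X, Y`: the defining relations hold and `W` is free as
a left `A`-module with basis `{X^i : i ≥ 1} ∪ {1} ∪ {Y^i : i ≥ 1}`. -/
structure IsGWA {A W : Type*} [Ring A] [Ring W]
    (α : A ≃+* A) (u : A) (ι : A →+* W) (X Y : W) : Prop where
  central : ∀ a : A, u * a = a * u
  YX : Y * X = ι (α u)
  XY : X * Y = ι u
  Ya : ∀ a : A, Y * ι a = ι (α a) * Y
  Xa : ∀ a : A, X * ι a = ι (α.symm a) * X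
  free : Function.Bijective
    (fun f : ℤ →₀ A => f.sum fun i a => ι a * gwaMon X Y i)

/-- `R` is the conformal ambiskew polynomial ring `R(A, α, u − α(u), 1)` with respect to
the embedding `ι : A →ₐ[K] R` and the elements `x, y`: the defining relations hold and
`R` is free as a left `A`-module with basis `{yⁱxʲ : i, j ≥ 0}`. -/
structure IsAmbiskew {K A R : Type*} [Field K] [Ring A] [Algebra K A] [Ring R] [Algebra K R]
    (α : A ≃ₐ[K] A) (u : A) (ι : A →ₐ[K] R) (x y : R) : Prop where
  ucentral : ∀ a : A, u * a = a * u
  ya : ∀ a : A, y * ι a = ι (α a) * y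
  xa : ∀ a : A, x * ι a = ι (α.symm a) * x
  xy : x * y = y * x + ι (u - α u)
  free : Function.Bijective
    (fun f : ℕ × ℕ →₀ A => f.sum fun p a => ι a * (y ^ p.1 * x ^ p.2))

/-- `S` is the skew Laurent polynomial ring `A[y^{±1}; α]` with respect to the embedding
`ι : A →ₐ[K] S` and the invertible element `Y`: `Y·a = α(a)·Y` and `S` is free as a left
`A`-module with basis `{Yⁱ : i ∈ ℤ}`. -/
structure IsSkewLaurent {K A S : Type*} [Field K] [Ring A] [Algebra K A] [Ring S] [Algebra K S]
    (α : A ≃ₐ[K] A) (ι : A →ₐ[K] S) (Y : Sˣ) : Prop where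
  comm : ∀ a : A, (Y : S) * ι a = ι (α a) * (Y : S)
  free : Function.Bijective
    (fun f : ℤ →₀ A => f.sum fun i a => ι a * ((Y ^ i : Sˣ) : S))

/-- `φ : R →+* C` exhibits `C` as the localization of `R` at the multiplicative set `Z`
of central elements: each element of `Z` is central and becomes a unit, every element of
`C` is a fraction, and the kernel of `φ` is the set of elements annihilated by `Z`. -/
structure IsCentralLocalization {R C : Type*} [Ring R] [Ring C] (Z : Set R) (φ : R →+* C) : Prop where
  central : ∀ s ∈ Z, ∀ r : R, s * r = r * s
  isUnit : ∀ s ∈ Z, IsUnit (φ s)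
  surj : ∀ c : C, ∃ r : R, ∃ s ∈ Z, c * φ s = φ r
  ker : ∀ r : R, φ r = 0 ↔ ∃ s ∈ Z, r * s = 0

/-- A two-sided ideal `P` is prime: it is proper and whenever the product of two two-sided
ideals lies in `P`, one of them lies in `P`. -/
def IsPrimeTwoSided {C : Type*} [Ring C] (P : TwoSidedIdeal C) : Prop :=
  P ≠ ⊤ ∧ ∀ I J : TwoSidedIdeal C, (∀ a ∈ I, ∀ b ∈ J, a * b ∈ P) → I ≤ P ∨ J ≤ P

/-- A two-sided ideal `M` is maximal: proper and maximal among proper two-sided ideals. -/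
def IsMaximalTwoSided {C : Type*} [Ring C] (M : TwoSidedIdeal C) : Prop :=
  M ≠ ⊤ ∧ ∀ T : TwoSidedIdeal C, M < T → T = ⊤

/-- Evaluation of a (commutative) multivariate polynomial over `K` at a family of
(pairwise commuting, central) elements of a possibly noncommutative `K`-algebra. -/
def mvEval {K A : Type*} [CommSemiring K] [Ring A] [Algebra K A] {n : ℕ}
    (v : Fin n → A) (p : MvPolynomial (Fin n) K) : A :=
  p.support.sum fun d => algebraMap K A (MvPolynomial.coeff d p) *
    ((List.finRange n).map fun i => v i ^ d i).prod

/-- The components of the graded ideal `J(I)` of a generalized Weyl algebra: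
`I_i = I_{-i} = A` for `i ≥ m`, `I_i = ∩_{ℓ=0}^{m−1−i} α^{−ℓ}(I)` for `0 ≤ i ≤ m−1`, and
`I_{−i} = ∩_{ℓ=i}^{m−1} α^{−ℓ}(I)` for `0 ≤ i ≤ m−1`. -/
def Jcomp {A : Type*} [Ring A] (α : A ≃+* A) (I : Set A) (m : ℕ) : ℤ → Set A :=
  fun d => if m ≤ d.natAbs then Set.univ
    else if 0 ≤ d then ⋂ ℓ ∈ Finset.range (m - d.natAbs), (⇑α.symm)^[ℓ] '' I
    else ⋂ ℓ ∈ Finset.Icc d.natAbs (m - 1), (⇑α.symm)^[ℓ] '' I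

/-- The subset of a generalized Weyl algebra consisting of all elements whose (unique)
graded components of each degree `d` have coefficients in the prescribed set `comp d`. -/
def gwaGradedSet {A W : Type*} [Ring A] [Ring W] (ι : A →+* W) (X Y : W)
    (comp : ℤ → Set A) : Set W :=
  {w | ∃ f : ℤ →₀ A, (∀ d, f d ∈ comp d) ∧ w = f.sum fun d a => ι a * gwaMon X Y d}

/-- The set `Au + Aα^m(u)` in `A`. -/
def genSet2 {A : Type*} [Ring A] (x y : A) : Set A :=
  {a : A | ∃ b c : A, a = b * x + c * y}

/-- The product of two sets in a ring, closed under finite sums: for two-sided ideals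
this is the usual ideal product. -/
def setMulSum {A : Type*} [Ring A] (S T : Set A) : Set A :=
  {x | ∃ (n : ℕ) (f g : Fin n → A), (∀ i, f i ∈ S ∧ g i ∈ T) ∧ x = ∑ i, f i * g i}

/-- The (right-nested) product of a list of sets in a ring; the empty product is `A`. -/
def listProdSet {A : Type*} [Ring A] (l : List (Set A)) : Set A :=
  l.foldr setMulSum Set.univ

/-- The element `d_i = α(u)·α²(u)⋯αⁱ(u)`. -/
def dElt {A : Type*} [Ring A] (α : A ≃+* A) (u : A) (i : ℕ) : A :=
  ((List.range i).map fun s => (⇑α)^[s + 1] u).prod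

/-- The element `e_i = α^{−i}(d_i) = u·α^{−1}(u)⋯α^{1−i}(u)`. -/
def eElt {A : Type*} [Ring A] (α : A ≃+* A) (u : A) (i : ℕ) : A :=
  (⇑α.symm)^[i] (dElt α u i)

/-- Product of two two-sided ideals. -/
def tsiMul {R : Type*} [Ring R] (I J : TwoSidedIdeal R) : TwoSidedIdeal R :=
  TwoSidedIdeal.span {x | ∃ a ∈ I, ∃ b ∈ J, x = a * b}

/-- The (right-nested) product of a list of two-sided ideals; the empty product is `R`. -/
def tsiListProd {R : Type*} [Ring R] (l : List (TwoSidedIdeal R)) : TwoSidedIdeal R :=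
  l.foldr tsiMul ⊤

/-- A subset of a ring is a right ideal. -/
def IsRightIdealSet {Q : Type*} [Ring Q] (S : Set Q) : Prop :=
  (0 : Q) ∈ S ∧ (∀ a ∈ S, ∀ b ∈ S, a + b ∈ S) ∧ (∀ a ∈ S, -a ∈ S) ∧
    (∀ a ∈ S, ∀ q : Q, a * q ∈ S)

/-- A right ideal is uniform: it is nonzero and any two nonzero elements generate right
ideals with nonzero intersection (equivalently, any two nonzero submodules intersect
nontrivially). -/
def IsUniformRightIdealSet {Q : Type*} [Ring Q] (S : Set Q) : Prop :=
  (∃ a ∈ S, a ≠ 0) ∧ ∀ a ∈ S, a ≠ 0 → ∀ b ∈ S, b ≠ 0 →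
    ∃ q₁ q₂ : Q, a * q₁ = b * q₂ ∧ a * q₁ ≠ 0

section GWADescent

variable {A W : Type*} [Ring A] [Ring W] {α : A ≃+* A} {u : A} {ι : A →+* W} {X Y : W}

theorem IsGWA.Y_pow_mul (hW : IsGWA α u ι X Y) (n : ℕ) (a : A) :
    Y ^ n * ι a = ι ((⇑α)^[n] a) * Y ^ n := by
  induction n generalizing a with
  | zero => simp
  | succ n ih =>
    rw [pow_succ, mul_assoc, hW.Ya, ← mul_assoc, ih, mul_assoc, Function.iterate_succ_apply]

/-- Coefficients move to the right of `X ^ n` by applying `α ^ n`; this form avoids `α⁻¹`. -/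
theorem IsGWA.mul_X_pow (hW : IsGWA α u ι X Y) (n : ℕ) (a : A) :
    ι a * X ^ n = X ^ n * ι ((⇑α)^[n] a) := by
  induction n generalizing a with
  | zero => simp
  | succ n ih =>
    have h : ι a * X = X * ι (α a) := by rw [hW.Xa, α.symm_apply_apply]
    rw [pow_succ', ← mul_assoc, h, mul_assoc, ih, mul_assoc, Function.iterate_succ_apply]

theorem IsGWA.iterate_central (hW : IsGWA α u ι X Y) (n : ℕ) (a : A) :
    (⇑α)^[n] u * a = a * (⇑α)^[n] u := by
  obtain ⟨b, rfl⟩ := α.surjective.iterate n a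
  rw [← iterate_map_mul, ← iterate_map_mul, hW.central]

theorem IsGWA.Y_pow_mem (hW : IsGWA α u ι X Y) (J : TwoSidedIdeal W) (n : ℕ)
    (hone : ∀ a : A, ∃ b c : A, a = u * b + (⇑α)^[n + 1] u * c) (h : Y ^ (n + 1) ∈ J) :
    Y ^ n ∈ J := by
  obtain ⟨b, c, hbc⟩ := hone 1
  have h1 : ι u * Y ^ n ∈ J := by
    have := J.mul_mem_left X _ h
    rwa [pow_succ', ← mul_assoc, hW.XY] at this
  have h2 : ι ((⇑α)^[n + 1] u) * Y ^ n ∈ J := by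
    have := J.mul_mem_right _ X h
    rwa [pow_succ, mul_assoc, hW.YX, hW.Y_pow_mul, ← Function.iterate_succ_apply] at this
  have h3 : Y ^ n = ι b * (ι u * Y ^ n) + ι c * (ι ((⇑α)^[n + 1] u) * Y ^ n) := by
    rw [← mul_assoc, ← mul_assoc, ← map_mul, ← map_mul, ← add_mul, ← map_add,
      ← hW.central b, ← hW.iterate_central (n + 1) c, ← hbc, map_one, one_mul]
  rw [h3]
  exact J.add_mem (J.mul_mem_left _ _ h1) (J.mul_mem_left _ _ h2)

theorem IsGWA.X_pow_mem (hW : IsGWA α u ι X Y) (J : TwoSidedIdeal W) (n : ℕ)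
    (hone : ∀ a : A, ∃ b c : A, a = u * b + (⇑α)^[n + 1] u * c) (h : X ^ (n + 1) ∈ J) :
    X ^ n ∈ J := by
  obtain ⟨b, c, hbc⟩ := hone 1
  have h1 : X ^ n * ι u ∈ J := by
    have := J.mul_mem_right _ Y h
    rwa [pow_succ, mul_assoc, hW.XY] at this
  have h2 : X ^ n * ι ((⇑α)^[n + 1] u) ∈ J := by
    have := J.mul_mem_left Y _ h
    rwa [pow_succ', ← mul_assoc, hW.YX, hW.mul_X_pow, ← Function.iterate_succ_apply] at this
  have h3 : X ^ n = X ^ n * ι u * ι b + X ^ n * ι ((⇑α)^[n + 1] u) * ι c := by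
    rw [mul_assoc, mul_assoc, ← map_mul, ← map_mul, ← mul_add, ← map_add, ← hbc, map_one, mul_one]
  rw [h3]
  exact J.add_mem (J.mul_mem_right _ _ h1) (J.mul_mem_right _ _ h2)

end GWADescent

theorem TwoSidedIdeal.eq_top_of_pow_mem_of_descent {W : Type*} [Ring W] (J : TwoSidedIdeal W)
    (z : W) (j : ℕ) (hstep : ∀ n < j, z ^ (n + 1) ∈ J → z ^ n ∈ J) (h : z ^ j ∈ J) : J = ⊤ := by
  induction j with
  | zero => exact J.one_mem_iff.mp (by simpa using h)
  | succ n ih => exact ih (fun m hm => hstep m (by omega)) (hstep n (by omega) h)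

/-- Lemma 3.8: in a generalized Weyl algebra, if `uA + α^j(u)A = A` and a two-sided ideal
`J` contains `Y^j` (resp. `X^j`) then it contains `Y^{j−1}` (resp. `X^{j−1}`);
consequently if `uA + α^i(u)A = A` for `1 ≤ i ≤ j` and `Y^j ∈ J` or `X^j ∈ J`,
then `J = W`. -/
theorem stmt8 {A W : Type*} [Ring A] [Ring W]
    (α : A ≃+* A) (u : A) (ι : A →+* W) (X Y : W) (hW : IsGWA α u ι X Y)
    (j : ℕ) (hj : 1 ≤ j)
    (hone : ∀ a : A, ∃ b c : A, a = u * b + (⇑α)^[j] u * c)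
    (J : TwoSidedIdeal W) :
    (Y ^ j ∈ J → Y ^ (j - 1) ∈ J) ∧ (X ^ j ∈ J → X ^ (j - 1) ∈ J) ∧
    ((∀ i : ℕ, 1 ≤ i → i ≤ j → ∀ a : A, ∃ b c : A, a = u * b + (⇑α)^[i] u * c) →
      (Y ^ j ∈ J ∨ X ^ j ∈ J) → J = ⊤) := by
  obtain ⟨n, rfl⟩ := Nat.exists_eq_add_of_le' hj
  refine ⟨hW.Y_pow_mem J n hone, hW.X_pow_mem J n hone, fun hall h => ?_⟩
  rcases h with h | h
  · exact J.eq_top_of_pow_mem_of_descent Y _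
      (fun m hm => hW.Y_pow_mem J m (hall (m + 1) (by omega) (by omega))) h
  · exact J.eq_top_of_pow_mem_of_descent X _
      (fun m hm => hW.X_pow_mem J m (hall (m + 1) (by omega) (by omega))) h
end
end

section
/- Let W = W(A, α, u) be a generalized Weyl algebra with u central in A, and let m ≥ 1 be such that uA + α^j(u)A = A for 1 ≤ j < m but uA + α^m(u)A ≠ A. Let I be a two-sided ideal of A containing uA + α^m(u)A. For i ≥ m set I_i = I_{−i} = A, and for 0 ≤ i ≤ m−1 set I_i = ∩_{ℓ=0}^{m−1−i} α^{−ℓ}(I) and I_{−i} = ∩_{ℓ=i}^{m−1} α^{−ℓ}(I). Then the A-submodule J = J(I) of W whose graded component of degree i ≥ 0 is I_i·Yⁱ and whose graded component of degree −i (i ≥ 1) is I_{−i}·Xⁱ is a ℤ-graded two-sided ideal of W. -/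
/-!
Writing `α^{-ℓ}(I) = {a | α^ℓ(a) ∈ I}`, all components of `J(I)` have one description: `a` lies
in the component of degree `d : ℤ` iff `α^ℓ(a) ∈ I` for every `0 ≤ ℓ < m` with `-d ≤ ℓ` and
`ℓ + d < m` (`mem_Jcomp_iff`). Elements with coefficients in these components form an additive
subgroup. The elements of `W` that multiply this subgroup into itself from a given side form a
subring, and `W` is generated as a ring by `A`, `X` and `Y`, so it is enough to multiply one
homogeneous term by an element of `A`, by `X` or by `Y`.

Multiplication by `X` or `Y` that moves away from degree `0` creates no new condition: on the
left it shifts the conditions by one step of `α`, on the right it keeps the coefficient, and one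
condition may drop out.
Multiplication that moves towards degree `0` produces a factor `α^j(u)` and adds at most one
condition to those already known. For this new `ℓ`, the factor becomes `u` or `α^m(u)` under
`α^ℓ`, and both lie in `I`.
-/

noncomputable section

/-! ### Components of `J(I)` -/

/-- A uniform description of the components of `J(I)` for degrees of either sign. -/
theorem mem_Jcomp_iff {A : Type*} [Ring A] (α : A ≃+* A) (I : Set A) (m : ℕ) (d : ℤ) (a : A) :
    a ∈ Jcomp α I m d ↔
      ∀ ℓ : ℕ, ℓ < m → -d ≤ ℓ → (ℓ : ℤ) + d < m → (⇑α)^[ℓ] a ∈ I := by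
  have key : ∀ ℓ : ℕ, a ∈ (⇑α.symm)^[ℓ] '' I ↔ (⇑α)^[ℓ] a ∈ I := by
    intro ℓ
    have h1 : Function.LeftInverse (⇑α)^[ℓ] (⇑α.symm)^[ℓ] :=
      Function.LeftInverse.iterate α.apply_symm_apply ℓ
    have h2 : Function.LeftInverse (⇑α.symm)^[ℓ] (⇑α)^[ℓ] :=
      Function.LeftInverse.iterate α.symm_apply_apply ℓ
    constructor
    · rintro ⟨b, hb, rfl⟩
      rwa [h1 b]
    · intro h
      exact ⟨_, h, h2 a⟩
  unfold Jcomp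
  split_ifs with h1 h2
  · simp only [Set.mem_univ, true_iff]
    intro ℓ _ _ _
    omega
  · simp only [Set.mem_iInter, key, Finset.mem_range]
    exact ⟨fun h ℓ _ _ _ => h ℓ (by omega), fun h ℓ _ => h ℓ (by omega) (by omega) (by omega)⟩
  · simp only [Set.mem_iInter, key, Finset.mem_Icc]
    exact ⟨fun h ℓ _ _ _ => h ℓ (by omega), fun h ℓ _ => h ℓ (by omega) (by omega) (by omega)⟩

section

variable {A W : Type*} [Ring A] [Ring W] {α : A ≃+* A} {u : A} {ι : A →+* W} {X Y : W}

/-! ### Monomials and generators -/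

theorem gwaMon_natCast (n : ℕ) : gwaMon X Y (n : ℤ) = Y ^ n := by
  simp [gwaMon]

theorem gwaMon_neg_natCast (n : ℕ) : gwaMon X Y (-(n : ℤ)) = X ^ n := by
  rcases n with _ | n
  · simp [gwaMon]
  · have h : ¬ (0 : ℤ) ≤ -((n + 1 : ℕ) : ℤ) := by omega
    simp only [gwaMon, if_neg h, neg_neg, Int.toNat_natCast]

theorem IsGWA.X_pow_mul (hW : IsGWA α u ι X Y) (n : ℕ) (a : A) :
    X ^ n * ι a = ι ((⇑α.symm)^[n] a) * X ^ n := by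
  induction n generalizing a with
  | zero => simp
  | succ n ih =>
    rw [pow_succ, mul_assoc, hW.Xa, ← mul_assoc, ih, mul_assoc, Function.iterate_succ_apply]

/-- A generalized Weyl algebra is generated as a ring by `A`, `X` and `Y`. -/
theorem IsGWA.closure_eq_top (hW : IsGWA α u ι X Y) (S : Subring W)
    (hι : ∀ a, ι a ∈ S) (hX : X ∈ S) (hY : Y ∈ S) (w : W) : w ∈ S := by
  obtain ⟨f, rfl⟩ := hW.free.2 w
  refine S.sum_mem fun d _ => S.mul_mem (hι _) ?_
  unfold gwaMon
  split_ifs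
  · exact S.pow_mem hY _
  · exact S.pow_mem hX _

/-! ### Graded additive subgroups -/

/-- The graded subset with components `comp d`, as an additive subgroup of `W`. -/
def gradedAddSubgroup (ι : A →+* W) (X Y : W) (comp : ℤ → AddSubgroup A) : AddSubgroup W where
  carrier := gwaGradedSet ι X Y fun d => comp d
  zero_mem' := ⟨0, fun d => (comp d).zero_mem, by simp⟩
  add_mem' := by
    rintro _ _ ⟨f, hf, rfl⟩ ⟨g, hg, rfl⟩
    refine ⟨f + g, fun d => (comp d).add_mem (hf d) (hg d), ?_⟩
    rw [Finsupp.sum_add_index'] <;> simp [add_mul]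
  neg_mem' := by
    rintro _ ⟨f, hf, rfl⟩
    refine ⟨-f, fun d => (comp d).neg_mem (hf d), ?_⟩
    rw [Finsupp.sum_neg_index (by simp)]
    simp [Finsupp.sum]

theorem term_mem_graded {comp : ℤ → AddSubgroup A} {d : ℤ} {a : A} (ha : a ∈ comp d) :
    ι a * gwaMon X Y d ∈ gradedAddSubgroup ι X Y comp := by
  classical
  refine ⟨Finsupp.single d a, fun e => ?_, by simp⟩
  rw [Finsupp.single_apply]
  split_ifs with h
  · exact h ▸ ha
  · exact (comp e).zero_mem

/-- An additive map that sends homogeneous terms of the graded subgroup into it preserves it. -/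
theorem map_mem_graded {comp : ℤ → AddSubgroup A} (φ : W →+ W)
    (hφ : ∀ (d : ℤ) (a : A), a ∈ comp d →
      φ (ι a * gwaMon X Y d) ∈ gradedAddSubgroup ι X Y comp)
    {w : W} (hw : w ∈ gradedAddSubgroup ι X Y comp) :
    φ w ∈ gradedAddSubgroup ι X Y comp := by
  obtain ⟨f, hf, rfl⟩ := hw
  rw [Finsupp.sum, map_sum]
  exact AddSubgroup.sum_mem _ fun d _ => hφ d _ (hf d)

/-- The component of degree `d` of `J(I)`, as an additive subgroup of `A`, in the form given by
`mem_Jcomp_iff`. -/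
def Jgrp (α : A ≃+* A) (I : TwoSidedIdeal A) (m : ℕ) (d : ℤ) : AddSubgroup A where
  carrier := {a | ∀ ℓ : ℕ, ℓ < m → -d ≤ ℓ → (ℓ : ℤ) + d < m → (⇑α)^[ℓ] a ∈ I}
  zero_mem' := fun ℓ _ _ _ => by
    rw [iterate_map_zero]; exact I.zero_mem
  add_mem' := fun ha hb ℓ h1 h2 h3 => by
    rw [iterate_map_add]; exact I.add_mem (ha ℓ h1 h2 h3) (hb ℓ h1 h2 h3)
  neg_mem' := fun ha ℓ h1 h2 h3 => by
    rw [iterate_map_neg]; exact I.neg_mem (ha ℓ h1 h2 h3)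

theorem mem_Jgrp {I : TwoSidedIdeal A} {m : ℕ} {d : ℤ} {a : A} :
    a ∈ Jgrp α I m d ↔
      ∀ ℓ : ℕ, ℓ < m → -d ≤ ℓ → (ℓ : ℤ) + d < m → (⇑α)^[ℓ] a ∈ I := Iff.rfl

theorem mul_mem_Jgrp_left {I : TwoSidedIdeal A} {m : ℕ} {d : ℤ} {a : A} (b : A)
    (ha : a ∈ Jgrp α I m d) : b * a ∈ Jgrp α I m d := fun ℓ h1 h2 h3 => by
  rw [iterate_map_mul]; exact I.mul_mem_left _ _ (ha ℓ h1 h2 h3)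

theorem mul_mem_Jgrp_right {I : TwoSidedIdeal A} {m : ℕ} {d : ℤ} {a : A} (b : A)
    (ha : a ∈ Jgrp α I m d) : a * b ∈ Jgrp α I m d := fun ℓ h1 h2 h3 => by
  rw [iterate_map_mul]; exact I.mul_mem_right _ _ (ha ℓ h1 h2 h3)

/-! ### Multiplying homogeneous terms by generators -/

/-- For `d > 0` the only possible new condition is at `ℓ = 0`, where the factor `u` lies in `I`. -/
theorem X_mul_term_mem (hW : IsGWA α u ι X Y) {I : TwoSidedIdeal A} {m : ℕ} (huI : u ∈ I)
    {d : ℤ} {a : A} (ha : a ∈ Jgrp α I m d) :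
    X * (ι a * gwaMon X Y d) ∈ gradedAddSubgroup ι X Y (Jgrp α I m) := by
  rw [← mul_assoc, hW.Xa, mul_assoc]
  rcases le_or_gt d 0 with hd | hd
  · obtain ⟨n, rfl⟩ : ∃ n : ℕ, d = -(n : ℤ) := ⟨d.natAbs, by omega⟩
    rw [gwaMon_neg_natCast, ← pow_succ', ← gwaMon_neg_natCast (X := X) (Y := Y)]
    refine term_mem_graded fun ℓ h1 h2 h3 => ?_
    obtain ⟨k, rfl⟩ : ∃ k, ℓ = k + 1 := ⟨ℓ - 1, by omega⟩
    rw [Function.iterate_succ_apply, α.apply_symm_apply]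
    exact ha k (by omega) (by omega) (by omega)
  · obtain ⟨n, rfl⟩ : ∃ n : ℕ, d = ((n + 1 : ℕ) : ℤ) := ⟨d.natAbs - 1, by omega⟩
    rw [gwaMon_natCast, pow_succ', ← mul_assoc X, hW.XY, ← mul_assoc, ← map_mul,
      ← gwaMon_natCast (X := X) (Y := Y)]
    refine term_mem_graded fun ℓ h1 h2 h3 => ?_
    rw [iterate_map_mul]
    rcases ℓ with _ | k
    · exact I.mul_mem_left _ _ huI
    · refine I.mul_mem_right _ _ ?_
      rw [Function.iterate_succ_apply, α.apply_symm_apply]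
      exact ha k (by omega) (by omega) (by omega)

/-- For `d < 0` the only possible new condition is at `ℓ = m - 1`, where the factor `α(u)` becomes
`α^m(u)`. -/
theorem Y_mul_term_mem (hW : IsGWA α u ι X Y) {I : TwoSidedIdeal A} {m : ℕ}
    (huI : (⇑α)^[m] u ∈ I) {d : ℤ} {a : A} (ha : a ∈ Jgrp α I m d) :
    Y * (ι a * gwaMon X Y d) ∈ gradedAddSubgroup ι X Y (Jgrp α I m) := by
  rw [← mul_assoc, hW.Ya, mul_assoc]
  rcases le_or_gt 0 d with hd | hd
  · obtain ⟨n, rfl⟩ : ∃ n : ℕ, d = (n : ℤ) := ⟨d.natAbs, by omega⟩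
    rw [gwaMon_natCast, ← pow_succ', ← gwaMon_natCast (X := X) (Y := Y)]
    refine term_mem_graded fun ℓ h1 h2 h3 => ?_
    rw [← Function.iterate_succ_apply]
    exact ha (ℓ + 1) (by omega) (by omega) (by omega)
  · obtain ⟨n, rfl⟩ : ∃ n : ℕ, d = -((n + 1 : ℕ) : ℤ) := ⟨d.natAbs - 1, by omega⟩
    rw [gwaMon_neg_natCast, pow_succ', ← mul_assoc Y, hW.YX, ← mul_assoc, ← map_mul,
      ← gwaMon_neg_natCast (X := X) (Y := Y)]
    refine term_mem_graded fun ℓ h1 h2 h3 => ?_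
    rw [iterate_map_mul, ← Function.iterate_succ_apply, ← Function.iterate_succ_apply]
    rcases (show ℓ + 1 = m ∨ ℓ + 1 < m by omega) with h | h
    · rw [Nat.succ_eq_add_one, h]
      exact I.mul_mem_left _ _ huI
    · exact I.mul_mem_right _ _ (ha (ℓ + 1) h (by omega) (by omega))

/-- For `d > 0` the only possible new condition is at `ℓ = m - d`, where the factor `α^d(u)` becomes
`α^m(u)`. -/
theorem term_mul_X_mem (hW : IsGWA α u ι X Y) {I : TwoSidedIdeal A} {m : ℕ}
    (huI : (⇑α)^[m] u ∈ I) {d : ℤ} {a : A} (ha : a ∈ Jgrp α I m d) :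
    ι a * gwaMon X Y d * X ∈ gradedAddSubgroup ι X Y (Jgrp α I m) := by
  rw [mul_assoc]
  rcases le_or_gt d 0 with hd | hd
  · obtain ⟨n, rfl⟩ : ∃ n : ℕ, d = -(n : ℤ) := ⟨d.natAbs, by omega⟩
    rw [gwaMon_neg_natCast, ← pow_succ, ← gwaMon_neg_natCast (X := X) (Y := Y)]
    exact term_mem_graded fun ℓ h1 h2 h3 => ha ℓ h1 (by omega) (by omega)
  · obtain ⟨n, rfl⟩ : ∃ n : ℕ, d = ((n + 1 : ℕ) : ℤ) := ⟨d.natAbs - 1, by omega⟩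
    rw [gwaMon_natCast, pow_succ, mul_assoc, hW.YX, hW.Y_pow_mul, ← mul_assoc, ← map_mul,
      ← gwaMon_natCast (X := X) (Y := Y), ← Function.iterate_succ_apply]
    refine term_mem_graded fun ℓ h1 h2 h3 => ?_
    rw [iterate_map_mul, ← Function.iterate_add_apply]
    rcases (show ℓ + (n + 1) = m ∨ ℓ + (n + 1) < m by omega) with h | h
    · rw [Nat.succ_eq_add_one, h]
      exact I.mul_mem_left _ _ huI
    · exact I.mul_mem_right _ _ (ha ℓ h1 (by omega) (by omega))

/-- For `d = -(n + 1)` the only possible new condition is at `ℓ = n`, where the factor `α^{-n}(u)`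
becomes `u`. -/
theorem term_mul_Y_mem (hW : IsGWA α u ι X Y) {I : TwoSidedIdeal A} {m : ℕ} (huI : u ∈ I)
    {d : ℤ} {a : A} (ha : a ∈ Jgrp α I m d) :
    ι a * gwaMon X Y d * Y ∈ gradedAddSubgroup ι X Y (Jgrp α I m) := by
  rw [mul_assoc]
  rcases le_or_gt 0 d with hd | hd
  · obtain ⟨n, rfl⟩ : ∃ n : ℕ, d = (n : ℤ) := ⟨d.natAbs, by omega⟩
    rw [gwaMon_natCast, ← pow_succ, ← gwaMon_natCast (X := X) (Y := Y)]
    exact term_mem_graded fun ℓ h1 h2 h3 => ha ℓ h1 (by omega) (by omega)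
  · obtain ⟨n, rfl⟩ : ∃ n : ℕ, d = -((n + 1 : ℕ) : ℤ) := ⟨d.natAbs - 1, by omega⟩
    rw [gwaMon_neg_natCast, pow_succ, mul_assoc, hW.XY, hW.X_pow_mul, ← mul_assoc, ← map_mul,
      ← gwaMon_neg_natCast (X := X) (Y := Y)]
    refine term_mem_graded fun ℓ h1 h2 h3 => ?_
    rw [iterate_map_mul]
    rcases (show ℓ = n ∨ n < ℓ by omega) with h | h
    · subst h
      rw [Function.LeftInverse.iterate α.apply_symm_apply ℓ u]
      exact I.mul_mem_left _ _ huI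
    · exact I.mul_mem_right _ _ (ha ℓ h1 (by omega) (by omega))

theorem term_mul_coeff_mem (hW : IsGWA α u ι X Y) {I : TwoSidedIdeal A} {m : ℕ}
    {d : ℤ} {a : A} (b : A) (ha : a ∈ Jgrp α I m d) :
    ι a * gwaMon X Y d * ι b ∈ gradedAddSubgroup ι X Y (Jgrp α I m) := by
  obtain ⟨c, hc⟩ : ∃ c, gwaMon X Y d * ι b = ι c * gwaMon X Y d := by
    unfold gwaMon
    split_ifs
    · exact ⟨_, hW.Y_pow_mul _ _⟩
    · exact ⟨_, hW.X_pow_mul _ _⟩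
  rw [mul_assoc, hc, ← mul_assoc, ← map_mul]
  exact term_mem_graded (mul_mem_Jgrp_right c ha)

/-! ### Stabilizers of additive subgroups -/

/-- The subring of all elements `w` with `w * G ⊆ G`. -/
def leftStabilizer (G : AddSubgroup W) : Subring W where
  carrier := {w | ∀ x ∈ G, w * x ∈ G}
  zero_mem' := fun x _ => by rw [zero_mul]; exact G.zero_mem
  one_mem' := fun x hx => by rwa [one_mul]
  add_mem' := fun ha hb x hx => by rw [add_mul]; exact G.add_mem (ha x hx) (hb x hx)
  neg_mem' := fun ha x hx => by rw [neg_mul]; exact G.neg_mem (ha x hx)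
  mul_mem' := fun ha hb x hx => by rw [mul_assoc]; exact ha _ (hb x hx)

/-- The subring of all elements `w` with `G * w ⊆ G`. -/
def rightStabilizer (G : AddSubgroup W) : Subring W where
  carrier := {w | ∀ x ∈ G, x * w ∈ G}
  zero_mem' := fun x _ => by rw [mul_zero]; exact G.zero_mem
  one_mem' := fun x hx => by rwa [mul_one]
  add_mem' := fun ha hb x hx => by rw [mul_add]; exact G.add_mem (ha x hx) (hb x hx)
  neg_mem' := fun ha x hx => by rw [mul_neg]; exact G.neg_mem (ha x hx)
  mul_mem' := fun ha hb x hx => by rw [← mul_assoc]; exact hb _ (ha x hx)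

end

/-- Proposition 3.9: with `uA + α^j(u)A = A` for `1 ≤ j < m` and `uA + α^m(u)A ≠ A`, and
`I` a two-sided ideal of `A` containing `uA + α^m(u)A`, the graded subset `J(I)` of `W`
with components `I_i·Yⁱ` and `I_{−i}·Xⁱ` is a (ℤ-graded) two-sided ideal of `W`. -/
theorem stmt9 {A W : Type*} [Ring A] [Ring W]
    (α : A ≃+* A) (u : A) (ι : A →+* W) (X Y : W) (hW : IsGWA α u ι X Y)
    (m : ℕ) (hm : 1 ≤ m)
    (hlt : ∀ j : ℕ, 1 ≤ j → j < m → ∀ a : A, ∃ b c : A, a = u * b + (⇑α)^[j] u * c)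
    (hne : ¬∀ a : A, ∃ b c : A, a = u * b + (⇑α)^[m] u * c)
    (I : TwoSidedIdeal A) (huI : u ∈ I) (hαuI : (⇑α)^[m] u ∈ I) :
    ∃ T : TwoSidedIdeal W,
      (T : Set W) = gwaGradedSet ι X Y (Jcomp α (I : Set A) m) := by
  let G := gradedAddSubgroup ι X Y (Jgrp α I m)
  have hl : ∀ w : W, w ∈ leftStabilizer G := hW.closure_eq_top _
    (fun b x hx => map_mem_graded (AddMonoidHom.mulLeft (ι b)) (fun d a ha => by
      rw [AddMonoidHom.coe_mulLeft, ← mul_assoc, ← map_mul]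
      exact term_mem_graded (mul_mem_Jgrp_left b ha)) hx)
    (fun x hx => map_mem_graded (AddMonoidHom.mulLeft X)
      (fun d a ha => X_mul_term_mem hW huI ha) hx)
    (fun x hx => map_mem_graded (AddMonoidHom.mulLeft Y)
      (fun d a ha => Y_mul_term_mem hW hαuI ha) hx)
  have hr : ∀ w : W, w ∈ rightStabilizer G := hW.closure_eq_top _
    (fun b x hx => map_mem_graded (AddMonoidHom.mulRight (ι b))
      (fun d a ha => term_mul_coeff_mem hW b ha) hx)
    (fun x hx => map_mem_graded (AddMonoidHom.mulRight X)
      (fun d a ha => term_mul_X_mem hW hαuI ha) hx)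
    (fun x hx => map_mem_graded (AddMonoidHom.mulRight Y)
      (fun d a ha => term_mul_Y_mem hW huI ha) hx)
  have hcomp : Jcomp α (I : Set A) m = fun d => (Jgrp α I m d : Set A) := by
    funext d
    ext a
    exact mem_Jcomp_iff α _ m d a
  refine ⟨TwoSidedIdeal.mk' (G : Set W) G.zero_mem G.add_mem G.neg_mem
    (fun {x y} hy => hl x y hy) (fun {x y} hx => hr y x hx), ?_⟩
  rw [TwoSidedIdeal.coe_mk', hcomp]
  rfl
end
end

section
/- Let W = W(A, α, u) be a generalized Weyl algebra with u central in A, and let m ≥ 1 be such that uA + α^j(u)A = A for 1 ≤ j < m but uA + α^m(u)A ≠ A. Let I = uA + α^m(u)A and let J(I) be the associated graded ideal of W. Then every prime two-sided ideal P of W with X^m ∈ P and Y^m ∈ P satisfies J(I) ⊆ P. -/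
/-!
Write `u_j = α^j(u)`; these elements are all central. For a two-sided ideal `P` of `W`, let
`P_d` be the set of `a : A` for which `a` times the degree-`d` monomial lies in `P`.
Multiplying by `X` or `Y` on either side moves one degree closer to `0`:

* if `α(c₁), c₂ ∈ P_{i+1}` then `u c₁ + u_{i+1} c₂ ∈ P_i` (`mem_of_Y_succ`);
* if `α⁻¹(c₁), c₂ ∈ P_{-(i+1)}` then `u_1 c₁ + u_{-i} c₂ ∈ P_{-i}` (`mem_of_X_succ`).

Since `Y^m ∈ P` we have `P_m = A`, so `P_{m-1}` contains `uA + u_m A = I`. Below that, let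
`1 ≤ i + 1 < m` and `a ∈ I_i`. Both `α(a)` and `a` lie in `I_{i+1} ⊆ P_{i+1}`, and comaximality
`1 = u b + u_{i+1} c` gives `a = u (b a) + u_{i+1} (c a) ∈ P_i`. This descending induction
(`mem_of_Y_pow_mem`), with its mirror image in negative degrees (`mem_of_X_pow_mem`), puts every
homogeneous component of `J(I)` into `P`.
-/

noncomputable section

section Iterates

variable {A : Type*} [Ring A] (α : A ≃+* A)

theorem central_iterate {u : A} (hu : ∀ a, u * a = a * u) (n : ℕ) (a : A) :
    (⇑α)^[n] u * a = a * (⇑α)^[n] u := by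
  induction n generalizing a with
  | zero => exact hu a
  | succ n ih =>
    rw [Function.iterate_succ_apply']
    have := congrArg α (ih (α.symm a))
    simpa using this

theorem symm_iterate_iterate (n : ℕ) (a : A) : (⇑α.symm)^[n] ((⇑α)^[n] a) = a :=
  Function.LeftInverse.iterate (fun x => α.symm_apply_apply x) n a

theorem iterate_symm_iterate (n : ℕ) (a : A) : (⇑α)^[n] ((⇑α.symm)^[n] a) = a :=
  Function.LeftInverse.iterate (fun x => α.apply_symm_apply x) n a

theorem mem_symm_iterate_image {I : Set A} {n : ℕ} {a : A} :
    a ∈ (⇑α.symm)^[n] '' I ↔ (⇑α)^[n] a ∈ I := by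
  constructor
  · rintro ⟨b, hb, rfl⟩
    rwa [iterate_symm_iterate]
  · exact fun h => ⟨_, h, symm_iterate_iterate α n a⟩

/-- Applying `α⁻ⁿ` turns `αⁿ(a) = u b + αⁿ⁺¹(u) c` into the shape used in negative degrees. -/
theorem eq_of_iterate_eq {u a b c : A} {n : ℕ}
    (h : (⇑α)^[n] a = u * b + (⇑α)^[n + 1] u * c) :
    a = α u * (⇑α.symm)^[n] c + (⇑α.symm)^[n] u * (⇑α.symm)^[n] b := by
  have := congrArg (⇑α.symm)^[n] h
  rwa [symm_iterate_iterate, iterate_map_add, iterate_map_mul, iterate_map_mul,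
    Function.iterate_succ_apply, symm_iterate_iterate, add_comm] at this

end Iterates

section Descent

variable {A W : Type*} [Ring A] [Ring W] {α : A ≃+* A} {u : A} {ι : A →+* W} {X Y : W}

/-- One step down in positive degree: the two terms arise from left multiplication by `X` and
right multiplication by `X`. -/
theorem mem_of_Y_succ (hW : IsGWA α u ι X Y) {P : TwoSidedIdeal W} {i : ℕ} {c₁ c₂ : A}
    (h₁ : ι (α c₁) * Y ^ (i + 1) ∈ P) (h₂ : ι c₂ * Y ^ (i + 1) ∈ P) :
    ι (u * c₁ + (⇑α)^[i + 1] u * c₂) * Y ^ i ∈ P := by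
  have e₁ : X * (ι (α c₁) * Y ^ (i + 1)) = ι (u * c₁) * Y ^ i := by
    rw [← mul_assoc, hW.Xa, RingEquiv.symm_apply_apply, pow_succ', mul_assoc, ← mul_assoc X,
      hW.XY, ← mul_assoc, ← map_mul, hW.central]
  have e₂ : ι c₂ * Y ^ (i + 1) * X = ι ((⇑α)^[i + 1] u * c₂) * Y ^ i := by
    rw [mul_assoc, pow_succ, mul_assoc, hW.YX, hW.Y_pow_mul, ← Function.iterate_succ_apply,
      ← mul_assoc, ← map_mul, central_iterate α hW.central]
  rw [map_add, add_mul, ← e₁, ← e₂]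
  exact P.add_mem (P.mul_mem_left _ _ h₁) (P.mul_mem_right _ _ h₂)

/-- One step up in negative degree: the two terms arise from left multiplication by `Y` and
right multiplication by `Y`. -/
theorem mem_of_X_succ (hW : IsGWA α u ι X Y) {P : TwoSidedIdeal W} {i : ℕ} {c₁ c₂ : A}
    (h₁ : ι (α.symm c₁) * X ^ (i + 1) ∈ P) (h₂ : ι c₂ * X ^ (i + 1) ∈ P) :
    ι (α u * c₁ + (⇑α.symm)^[i] u * c₂) * X ^ i ∈ P := by
  have e₁ : Y * (ι (α.symm c₁) * X ^ (i + 1)) = ι (α u * c₁) * X ^ i := by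
    rw [← mul_assoc, hW.Ya, RingEquiv.apply_symm_apply, pow_succ', mul_assoc, ← mul_assoc Y,
      hW.YX, ← mul_assoc, ← map_mul]
    exact congrArg (fun t => ι t * X ^ i) (central_iterate α hW.central 1 c₁).symm
  have e₂ : ι c₂ * X ^ (i + 1) * Y = ι ((⇑α.symm)^[i] u * c₂) * X ^ i := by
    rw [mul_assoc, pow_succ, mul_assoc, hW.XY, hW.X_pow_mul, ← mul_assoc, ← map_mul]
    exact congrArg (fun t => ι t * X ^ i) (central_iterate α.symm hW.central i c₂).symm
  rw [map_add, add_mul, ← e₁, ← e₂]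
  exact P.add_mem (P.mul_mem_left _ _ h₁) (P.mul_mem_right _ _ h₂)

/-- The components of `J(I)` in degrees `0, …, m` lie in `P`; the induction is on
`k = m - i`. -/
theorem mem_of_Y_pow_mem (hW : IsGWA α u ι X Y) {P : TwoSidedIdeal W} {m : ℕ}
    (hlt : ∀ j : ℕ, 1 ≤ j → j < m → ∀ a : A, ∃ b c : A, a = u * b + (⇑α)^[j] u * c)
    (hY : Y ^ m ∈ P) (k : ℕ) : ∀ i, i + k = m → ∀ a : A,
      (∀ ℓ < k, ∃ b c : A, (⇑α)^[ℓ] a = u * b + (⇑α)^[m] u * c) → ι a * Y ^ i ∈ P := by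
  induction k with
  | zero =>
    rintro i rfl a -
    exact P.mul_mem_left _ _ hY
  | succ k ih =>
    intro i hi a ha
    rcases Nat.eq_zero_or_pos k with rfl | hk
    · obtain ⟨b, c, h⟩ := ha 0 (by omega)
      obtain rfl : m = i + 1 := by omega
      rw [Function.iterate_zero_apply] at h
      rw [h]
      exact mem_of_Y_succ hW (P.mul_mem_left _ _ hY) (P.mul_mem_left _ _ hY)
    · obtain ⟨b, c, h⟩ := hlt (i + 1) (by omega) (by omega) 1
      have h₁ : ι (α a) * Y ^ (i + 1) ∈ P :=
        ih (i + 1) (by omega) (α a) fun ℓ hℓ => ha (ℓ + 1) (by omega)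
      have h₂ : ι a * Y ^ (i + 1) ∈ P :=
        ih (i + 1) (by omega) a fun ℓ hℓ => ha ℓ (by omega)
      have e : a = u * (b * a) + (⇑α)^[i + 1] u * (c * a) := by
        rw [← mul_assoc, ← mul_assoc, ← add_mul, ← h, one_mul]
      rw [e]
      apply mem_of_Y_succ hW
      · rw [map_mul, map_mul, mul_assoc]
        exact P.mul_mem_left _ _ h₁
      · rw [map_mul, mul_assoc]
        exact P.mul_mem_left _ _ h₂

/-- The components of `J(I)` in degrees `-m, …, 0` lie in `P`; the induction is on
`k = m - i`. -/
theorem mem_of_X_pow_mem (hW : IsGWA α u ι X Y) {P : TwoSidedIdeal W} {m : ℕ}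
    (hlt : ∀ j : ℕ, 1 ≤ j → j < m → ∀ a : A, ∃ b c : A, a = u * b + (⇑α)^[j] u * c)
    (hX : X ^ m ∈ P) (k : ℕ) : ∀ i, i + k = m → ∀ a : A,
      (∀ ℓ, i ≤ ℓ → ℓ < m → ∃ b c : A, (⇑α)^[ℓ] a = u * b + (⇑α)^[m] u * c) →
      ι a * X ^ i ∈ P := by
  induction k with
  | zero =>
    rintro i rfl a -
    exact P.mul_mem_left _ _ hX
  | succ k ih =>
    intro i hi a ha
    rcases Nat.eq_zero_or_pos k with rfl | hk
    · obtain ⟨b, c, h⟩ := ha i le_rfl (by omega)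
      obtain rfl : m = i + 1 := by omega
      rw [eq_of_iterate_eq α h]
      exact mem_of_X_succ hW (P.mul_mem_left _ _ hX) (P.mul_mem_left _ _ hX)
    · obtain ⟨b, c, h⟩ := hlt (i + 1) (by omega) (by omega) ((⇑α)^[i] 1)
      have h₁ : ι (α.symm a) * X ^ (i + 1) ∈ P := by
        refine ih (i + 1) (by omega) (α.symm a) fun ℓ hiℓ hℓ => ?_
        obtain ⟨n, rfl⟩ : ∃ n, ℓ = n + 1 := ⟨ℓ - 1, by omega⟩
        rw [Function.iterate_succ_apply, RingEquiv.apply_symm_apply]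
        exact ha n (by omega) (by omega)
      have h₂ : ι a * X ^ (i + 1) ∈ P :=
        ih (i + 1) (by omega) a fun ℓ hiℓ hℓ => ha ℓ (by omega) hℓ
      have e : a = α u * ((⇑α.symm)^[i] c * a) + (⇑α.symm)^[i] u * ((⇑α.symm)^[i] b * a) := by
        rw [← mul_assoc, ← mul_assoc, ← add_mul, ← eq_of_iterate_eq α h, one_mul]
      rw [e]
      apply mem_of_X_succ hW
      · rw [map_mul, map_mul, mul_assoc]
        exact P.mul_mem_left _ _ h₁
      · rw [map_mul, mul_assoc]
        exact P.mul_mem_left _ _ h₂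

end Descent

/-- Lemma 3.13: with `uA + α^j(u)A = A` for `1 ≤ j < m` but `uA + α^m(u)A ≠ A`, and
`I = uA + α^m(u)A`, every prime two-sided ideal `P` of `W` containing `X^m` and `Y^m`
contains the graded ideal `J(I)`. -/
theorem stmt12 {A W : Type*} [Ring A] [Ring W]
    (α : A ≃+* A) (u : A) (ι : A →+* W) (X Y : W) (hW : IsGWA α u ι X Y)
    (m : ℕ) (hm : 1 ≤ m)
    (hlt : ∀ j : ℕ, 1 ≤ j → j < m → ∀ a : A, ∃ b c : A, a = u * b + (⇑α)^[j] u * c)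
    (hne : ¬∀ a : A, ∃ b c : A, a = u * b + (⇑α)^[m] u * c) :
    ∀ P : TwoSidedIdeal W, IsPrimeTwoSided P → X ^ m ∈ P → Y ^ m ∈ P →
      gwaGradedSet ι X Y
        (Jcomp α {a : A | ∃ b c : A, a = u * b + (⇑α)^[m] u * c} m) ⊆ (P : Set W) := by
  rintro P - hX hY w ⟨f, hf, rfl⟩
  change (f.sum fun d a => ι a * gwaMon X Y d) ∈ P
  refine sum_mem fun d _ => ?_
  have hd := hf d
  simp only [gwaMon]
  by_cases hmd : m ≤ d.natAbs
  · -- In degrees of absolute value at least `m` the monomial itself lies in `P`.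
    refine P.mul_mem_left _ _ ?_
    split_ifs with h0
    · rw [← Nat.sub_add_cancel (show m ≤ d.toNat by omega), pow_add]
      exact P.mul_mem_left _ _ hY
    · rw [← Nat.sub_add_cancel (show m ≤ (-d).toNat by omega), pow_add]
      exact P.mul_mem_left _ _ hX
  · simp only [Jcomp, if_neg hmd] at hd
    split_ifs at hd ⊢ with h0
    · refine mem_of_Y_pow_mem hW hlt hY (m - d.natAbs) _ (by omega) _ fun ℓ hℓ => ?_
      exact (mem_symm_iterate_image α).1 (Set.mem_iInter₂.1 hd ℓ (Finset.mem_range.2 hℓ))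
    · refine mem_of_X_pow_mem hW hlt hX (m - d.natAbs) _ (by omega) _ fun ℓ hiℓ hℓ => ?_
      exact (mem_symm_iterate_image α).1
        (Set.mem_iInter₂.1 hd ℓ (Finset.mem_Icc.2 (by omega)))
end
end
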